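/- For t ∈ [0,1] and δ ≥ 0, define f_{t,δ}: ℝ → ℝ by f_{t,δ}(x) = 0 for x ≤ tδ and f_{t,δ}(x) = sqrt(1 − tδ/x) for x > tδ. If L is a positive semidefinite matrix and Q is the projection onto its range, then ‖f_{t,δ}(L) − Q‖ ≤ 1 − sqrt(1 − t) whenever every nonzero eigenvalue of L is ≥ δ. -/

import Mathlib

open Matrix ComplexOrder

open scoped Matrix.Norms.L2Operator in
theorem norm_cfc_sub_le_aux {D : ℕ} {L : Matrix (Fin D) (Fin D) ℂ} (hL : L.IsHermitian)
    (f g : ℝ → ℝ) (c : ℝ) (hc : 0 ≤ c)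
    (h : ∀ i, |f (hL.eigenvalues i) - g (hL.eigenvalues i)| ≤ c) :
    ‖Matrix.toEuclideanCLM (𝕜 := ℂ) (hL.cfc f - hL.cfc g)‖ ≤ c := by
  rw [Matrix.l2_opNorm_toEuclideanCLM, Matrix.IsHermitian.cfc, Matrix.IsHermitian.cfc, ← map_sub,
    Unitary.conjStarAlgAut_apply, ← Unitary.coe_star, CStarRing.norm_mul_coe_unitary,
    CStarRing.norm_coe_unitary_mul, Matrix.diagonal_sub, Matrix.l2_opNorm_diagonal,
    pi_norm_le_iff_of_nonneg hc]
  intro i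
  have := h i
  simp only [Function.comp_apply]
  rw [← RCLike.ofReal_sub, RCLike.norm_ofReal]
  exact this

/-- For `f_{t,δ}(x) = 0` if `x ≤ tδ` and `sqrt(1 − tδ/x)` otherwise, and `L`
positive semidefinite with every nonzero eigenvalue `≥ δ`, one has
`‖f_{t,δ}(L) − Q‖ ≤ 1 − sqrt(1 − t)`, where `Q = θ(L)` is the projection onto the range of `L`
(Heaviside functional calculus). -/
theorem stmt_9 (D : ℕ) (t δ : ℝ) (ht0 : 0 ≤ t) (ht1 : t ≤ 1) (hδ : 0 ≤ δ)
    (L : Matrix (Fin D) (Fin D) ℂ) (hL : L.PosSemidef)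
    (hev : ∀ i, hL.1.eigenvalues i ≠ 0 → δ ≤ hL.1.eigenvalues i) :
    ‖Matrix.toEuclideanCLM (𝕜 := ℂ)
        (hL.1.cfc (fun x => if x ≤ t * δ then 0 else Real.sqrt (1 - t * δ / x))
          - hL.1.cfc (fun x => if x ≤ 0 then 0 else 1))‖
      ≤ 1 - Real.sqrt (1 - t) := by
  have hs1 : Real.sqrt (1 - t) ≤ 1 := Real.sqrt_le_one.mpr (by linarith)
  apply norm_cfc_sub_le_aux hL.1 _ _ _ (by linarith)
  intro i
  have h0 := hL.eigenvalues_nonneg i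
  have h1 := hev i
  generalize hL.1.eigenvalues i = x at h0 h1
  have htd : 0 ≤ t * δ := mul_nonneg ht0 hδ
  rcases h0.eq_or_lt with rfl | hx
  · simp [htd, hs1]
  · have hdx := h1 hx.ne'
    have htd' : t * δ ≤ t * x := mul_le_mul_of_nonneg_left hdx ht0
    simp only [not_le.mpr hx, if_false]
    split_ifs with h
    · have : t = 1 := by nlinarith
      simp [this]
    · have h2 : t * δ / x ≤ t := by rwa [div_le_iff₀ hx]
      have h3 : 0 ≤ t * δ / x := by positivity
      have h4 : Real.sqrt (1 - t) ≤ Real.sqrt (1 - t * δ / x) := Real.sqrt_le_sqrt (by linarith)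
      have h5 : Real.sqrt (1 - t * δ / x) ≤ 1 := Real.sqrt_le_one.mpr (by linarith)
      rw [abs_le]
      constructor <;> linarith
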